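/- Let (Ω, P) be a finite probability space with binary random variables ỹ, y* : Ω → {0,1}, with P(y*=0) > 0, P(y*=1) > 0, P(ỹ=0) > 0, and P(ỹ=1) > 0, and noise rates P(ỹ=0|y*=1) < 1/2 and P(ỹ=1|y*=0) < 1/2. With p, LB, UB, CPS, CNS defined as in DeCoLe (p(ω)=P(ỹ=1|y*=y*(ω)), LB = E[p|ỹ=1], UB = E[p|ỹ=0]), suppose additionally P(ỹ=1|y*=1) > LB and P(ỹ=1|y*=0) < UB fail to hold with equality only on null sets, i.e. assume strictly P(ỹ=1|y*=0) < P(ỹ=1|y*=1). Then every truly positive instance lies in CPS and every truly negative instance lies in CNS; consequently, the set of instances flagged by DeCoLe, {ỹ=0} ∩ CPS ∪ {ỹ=1} ∩ CNS, equals exactly the true mislabeled set {ω : ỹ(ω) ≠ y*(ω)} provided moreover LB > P(ỹ=1|y*=0) and UB < P(ỹ=1|y*=1). -/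

import Mathlib

open Finset

noncomputable def Pr {Ω : Type} [Fintype Ω] (w : Ω → ℝ) (A : Set Ω) : ℝ :=
  ∑ ω, A.indicator w ω

noncomputable def cPr {Ω : Type} [Fintype Ω] (w : Ω → ℝ) (A B : Set Ω) : ℝ :=
  Pr w (A ∩ B) / Pr w B

noncomputable def cExp {Ω : Type} [Fintype Ω] (w : Ω → ℝ) (f : Ω → ℝ) (B : Set Ω) : ℝ :=
  (∑ ω, B.indicator (fun ω' => w ω' * f ω') ω) / Pr w B

theorem cExp_le_aux {Ω : Type} [Fintype Ω] (w f : Ω → ℝ) (B : Set Ω) (c : ℝ)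
    (hw : ∀ ω, 0 ≤ w ω) (hB : 0 < Pr w B) (hf : ∀ ω, f ω ≤ c) : cExp w f B ≤ c := by
  unfold cExp
  rw [div_le_iff₀ hB]
  unfold Pr
  rw [Finset.mul_sum]
  apply Finset.sum_le_sum
  intro ω _
  by_cases h : ω ∈ B
  · simp only [Set.indicator_of_mem h]
    nlinarith [mul_le_mul_of_nonneg_left (hf ω) (hw ω)]
  · simp [Set.indicator_of_notMem h]

theorem le_cExp_aux {Ω : Type} [Fintype Ω] (w f : Ω → ℝ) (B : Set Ω) (c : ℝ)
    (hw : ∀ ω, 0 ≤ w ω) (hB : 0 < Pr w B) (hf : ∀ ω, c ≤ f ω) : c ≤ cExp w f B := by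
  unfold cExp
  rw [le_div_iff₀ hB]
  unfold Pr
  rw [Finset.mul_sum]
  apply Finset.sum_le_sum
  intro ω _
  by_cases h : ω ∈ B
  · simp only [Set.indicator_of_mem h]
    nlinarith [mul_le_mul_of_nonneg_left (hf ω) (hw ω)]
  · simp [Set.indicator_of_notMem h]

/-- Sharpened Theorem 1: with strict separation of the class-conditional ideal
probabilities by the thresholds, the flagged set equals the true mislabeled set. -/
theorem stmt5 {Ω : Type} [Fintype Ω] (w : Ω → ℝ) (ty ys : Ω → Fin 2)
    (hw : ∀ ω, 0 ≤ w ω) (hsum : ∑ ω, w ω = 1)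
    (hys0 : 0 < Pr w {ω | ys ω = 0}) (hys1 : 0 < Pr w {ω | ys ω = 1})
    (hty0 : 0 < Pr w {ω | ty ω = 0}) (hty1 : 0 < Pr w {ω | ty ω = 1})
    (hn0 : cPr w {ω | ty ω = 0} {ω | ys ω = 1} < 1/2)
    (hn1 : cPr w {ω | ty ω = 1} {ω | ys ω = 0} < 1/2)
    (p : Ω → ℝ) (hp : ∀ ω, p ω = cPr w {ω' | ty ω' = 1} {ω' | ys ω' = ys ω})
    (LB UB : ℝ)
    (hLB : LB = cExp w p {ω | ty ω = 1})
    (hUB : UB = cExp w p {ω | ty ω = 0})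
    (hstrict : cPr w {ω | ty ω = 1} {ω | ys ω = 0} < cPr w {ω | ty ω = 1} {ω | ys ω = 1})
    (hLBsep : cPr w {ω | ty ω = 1} {ω | ys ω = 0} < LB)
    (hUBsep : UB < cPr w {ω | ty ω = 1} {ω | ys ω = 1}) :
    (∀ ω, ys ω = 1 → LB ≤ p ω) ∧ (∀ ω, ys ω = 0 → p ω ≤ UB) ∧
    (({ω | ty ω = 0} ∩ {ω | LB ≤ p ω}) ∪ ({ω | ty ω = 1} ∩ {ω | p ω ≤ UB})
      = {ω | ty ω ≠ ys ω}) := by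
  have hp0 : ∀ ω, ys ω = 0 → p ω = cPr w {ω | ty ω = 1} {ω | ys ω = 0} := by
    intro ω h
    rw [hp, h]
  have hp1 : ∀ ω, ys ω = 1 → p ω = cPr w {ω | ty ω = 1} {ω | ys ω = 1} := by
    intro ω h
    rw [hp, h]
  have hc : ∀ x : Fin 2, x = 0 ∨ x = 1 := by decide
  have hL : LB ≤ cPr w {ω | ty ω = 1} {ω | ys ω = 1} := by
    rw [hLB]
    refine cExp_le_aux w p _ _ hw hty1 fun ω => ?_
    rcases hc (ys ω) with h | h
    · rw [hp0 ω h]; exact hstrict.le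
    · rw [hp1 ω h]
  have hU : cPr w {ω | ty ω = 1} {ω | ys ω = 0} ≤ UB := by
    rw [hUB]
    refine le_cExp_aux w p _ _ hw hty0 fun ω => ?_
    rcases hc (ys ω) with h | h
    · rw [hp0 ω h]
    · rw [hp1 ω h]; exact hstrict.le
  refine ⟨fun ω h => by rw [hp1 ω h]; exact hL, fun ω h => by rw [hp0 ω h]; exact hU, ?_⟩
  ext ω
  simp only [Set.mem_union, Set.mem_inter_iff, Set.mem_ofPred_eq]
  rcases hc (ys ω) with h | h <;> rcases hc (ty ω) with k | k
  · simp [h, k, hp0 ω h, hLBsep]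
  · simp [h, k, hp0 ω h, hU]
  · simp [h, k, hp1 ω h, hL]
  · simp [h, k, hp1 ω h, hUBsep]
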